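/- Let A ⊆ ℝ² be a Borel set with 0 < λ(A) < ∞, where λ is two-dimensional Lebesgue measure, and let λ^A = λ(A)^{−1}·λ|_A be the normalized uniform distribution on A (a pre-permuton, since its marginals are absolutely continuous and hence atomless). Then lim_{n→∞} H_n(λ^A)/(n·log n) = 1. -/

import Mathlib

open MeasureTheory Filter

/-- The probability that `n` i.i.d. points sampled from `μ` realize the pattern `π`. -/
noncomputable def patternProb {n : ℕ} (μ : Measure (ℝ × ℝ)) (π : Equiv.Perm (Fin n)) : ℝ :=
  (n.factorial : ℝ) *
    ((Measure.pi fun _ : Fin n => μ)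
      {p : Fin n → ℝ × ℝ | ∀ i j : Fin n, i < j →
        (p i).1 < (p j).1 ∧ ((p i).2 < (p j).2 ↔ π i < π j)}).toReal

/-- Sampling entropy `H_n(μ)`. -/
noncomputable def samplingEntropy (μ : Measure (ℝ × ℝ)) (n : ℕ) : ℝ :=
  ∑ π : Equiv.Perm (Fin n), Real.negMulLog (patternProb μ π)

/-- A pre-permuton: a Borel probability measure on `ℝ²` with atomless marginals. -/
def IsPrePermuton (μ : Measure (ℝ × ℝ)) : Prop :=
  IsProbabilityMeasure μ ∧ (∀ x : ℝ, μ.map Prod.fst {x} = 0) ∧ ∀ y : ℝ, μ.map Prod.snd {y} = 0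

/-- A permuton: a Borel probability measure on `[0,1]²` with uniform marginals. -/
def IsPermuton (μ : Measure (ℝ × ℝ)) : Prop :=
  μ (Set.Icc (0:ℝ) 1 ×ˢ Set.Icc (0:ℝ) 1)ᶜ = 0 ∧
  μ.map Prod.fst = volume.restrict (Set.Icc (0:ℝ) 1) ∧
  μ.map Prod.snd = volume.restrict (Set.Icc (0:ℝ) 1)

/-!
The upper bound is `H_n(μ) ≤ log n!`. For the lower bound, absolute continuity with respect to a
product measure provides a set `B` of mass close to `1` on which `μ` is at most a product `ν₁ × ν₂`
of finite total mass `K`. Under `ν₁ × ν₂` the orders of the two coordinates of `k` given points are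
independent, and prescribing each of them costs a factor `1 / k!`. A union bound over the `k` points
shows that a fixed pattern occurs with at least `k` of the `n` points in `B` with probability at
most `n! 2ⁿ Kᵏ / k!²`, which is `exp (-(1 - 2δ + o(1)) n log n)` for `k = ⌈(1 - δ) n⌉`. By Markov's
inequality fewer than `k` points lie in `B` with probability at most `δ`, and since this event does
not depend on the labelling of the points, removing it changes the pattern distribution by total
mass at most `δ`. Hence `H_n(μ) ≥ (1 - 2δ)² n log n` asymptotically.
-/

lemma ncard_preimage_eq_sum_indicator {ι X : Type*} [Fintype ι] (B : Set X) (p : ι → X) :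
    (p ⁻¹' B).ncard = ∑ i, B.indicator (1 : X → ℕ) (p i) := by
  classical
  rw [Set.ncard_eq_toFinset_card', Set.toFinset_card, Fintype.card_subtype, Finset.card_filter]
  simp only [Set.indicator_apply, Set.mem_preimage, Pi.one_apply]

lemma measurable_ncard_preimage {ι X : Type*} [Finite ι] [MeasurableSpace X] {B : Set X}
    (hB : MeasurableSet B) : Measurable fun p : ι → X => (p ⁻¹' B).ncard := by
  cases nonempty_fintype ι
  simp_rw [ncard_preimage_eq_sum_indicator]
  exact Finset.measurable_sum _ fun i _ =>
    (measurable_one.indicator hB).comp (measurable_pi_apply i)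

section Pi

variable {ι X : Type*} [Fintype ι] [MeasurableSpace X]

lemma measurePi_mono {α : ι → Type*} [∀ i, MeasurableSpace (α i)] {μ ν : ∀ i, Measure (α i)}
    [∀ i, SigmaFinite (μ i)] (h : ∀ i, μ i ≤ ν i) : Measure.pi μ ≤ Measure.pi ν := by
  have houter : (Measure.pi μ).toOuterMeasure ≤ OuterMeasure.pi fun i => (ν i).toOuterMeasure :=
    OuterMeasure.le_pi.2 fun s _ => by
      simpa [piPremeasure] using Finset.prod_le_prod' fun i _ => h i (s i)
  refine Measure.le_iff.2 fun s hs => ?_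
  rw [Measure.pi_def ν, toMeasure_apply _ _ hs]
  exact houter s

lemma measurePreserving_comp_perm (μ : Measure X) [SigmaFinite μ] (σ : Equiv.Perm ι) :
    MeasurePreserving (fun p : ι → X => p ∘ σ) (Measure.pi fun _ => μ) (Measure.pi fun _ => μ) :=
  measurePreserving_arrowCongr' (μ := fun _ => μ) (ν := fun _ => μ) σ.symm (.refl X)
    fun _ => .id μ

lemma measurePreserving_finsetRestrict (μ : Measure X) [IsProbabilityMeasure μ] (T : Finset ι) :
    MeasurePreserving (T.restrict (π := fun _ => X)) (Measure.pi fun _ => μ)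
      (Measure.pi fun _ => μ) :=
  ⟨T.measurable_restrict, by rw [← Measure.infinitePi_eq_pi, Measure.infinitePi_map_restrict]⟩

lemma measurePreserving_eval_prodMk (μ : Measure X) [IsProbabilityMeasure μ] {i j : ι}
    (hij : i ≠ j) :
    MeasurePreserving (fun p : ι → X => (p i, p j)) (Measure.pi fun _ => μ) (μ.prod μ) := by
  have hindep := (ProbabilityTheory.iIndepFun_pi (μ := fun _ : ι => μ) (X := fun _ => id)
    fun _ => aemeasurable_id).indepFun hij
  refine ⟨by fun_prop, ?_⟩
  simpa [(measurePreserving_eval (fun _ : ι => μ) _).map_eq, Function.eval] using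
    (ProbabilityTheory.indepFun_iff_map_prod_eq_prod_map_map
      (measurable_pi_apply i).aemeasurable (measurable_pi_apply j).aemeasurable).1 hindep

lemma ae_injective_comp {Y : Type*} [MeasurableSpace Y] [MeasurableEq Y] {f : X → Y}
    (hf : Measurable f) (μ : Measure X) [IsProbabilityMeasure μ] (hfiber : ∀ y, μ (f ⁻¹' {y}) = 0) :
    ∀ᵐ p ∂Measure.pi fun _ : ι => μ, Function.Injective (f ∘ p) := by
  have hpair : ∀ i j, i ≠ j → ∀ᵐ p ∂Measure.pi fun _ : ι => μ, f (p i) ≠ f (p j) := by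
    intro i j hij
    refine (measurePreserving_eval_prodMk μ hij).quasiMeasurePreserving.ae
      (p := fun x => f x.1 ≠ f x.2) ?_
    have hmeas : MeasurableSet {x : X × X | f x.1 = f x.2} :=
      measurableSet_eq_fun (hf.comp measurable_fst) (hf.comp measurable_snd)
    rw [ae_iff]
    simp only [ne_eq, not_not]
    rw [Measure.measure_prod_null hmeas]
    refine .of_forall fun x => ?_
    simpa [Set.preimage, eq_comm] using hfiber (f x)
  have hall : ∀ᵐ p ∂Measure.pi fun _ : ι => μ, ∀ i j, i ≠ j → f (p i) ≠ f (p j) := by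
    simpa only [ae_all_iff, eventually_imp_distrib_left] using hpair
  filter_upwards [hall] with p hp i j hij
  exact not_imp_not.1 (hp i j) hij

lemma mul_measureReal_le_ncard_preimage_le (μ : Measure X) [IsProbabilityMeasure μ] {B : Set X}
    (hB : MeasurableSet B) (a : ℝ) :
    a * (Measure.pi fun _ : ι => μ).real {p | a ≤ (p ⁻¹' B).ncard} ≤ Fintype.card ι * μ.real B := by
  have hcard : ∀ p : ι → X, ((p ⁻¹' B).ncard : ℝ) = ∑ i, B.indicator 1 (p i) := fun p => by
    classical
    simp [ncard_preimage_eq_sum_indicator, Set.indicator_apply]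
  have hint : ∀ i, Integrable (fun p : ι → X => B.indicator (1 : X → ℝ) (p i))
      (Measure.pi fun _ => μ) := fun i =>
    (measurePreserving_eval (fun _ : ι => μ) i).integrable_comp_of_integrable
      ((integrable_const 1).indicator hB)
  have hmean : ∀ i, ∫ p, B.indicator (1 : X → ℝ) (p i) ∂(Measure.pi fun _ : ι => μ) = μ.real B :=
    fun i => by
      rw [integral_comp_eval (μ := fun _ : ι => μ)
        (measurable_one.indicator hB).aestronglyMeasurable, integral_indicator_one hB]
  simp_rw [hcard]
  calc _ ≤ ∫ p, ∑ i, B.indicator (1 : X → ℝ) (p i) ∂(Measure.pi fun _ : ι => μ) :=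
        mul_meas_ge_le_integral_of_nonneg
          (.of_forall fun p => Finset.sum_nonneg fun i _ => Set.indicator_nonneg (by simp) _)
          (integrable_finsetSum _ fun i _ => hint i) a
    _ = Fintype.card ι * μ.real B := by
        simp [integral_finsetSum _ fun i _ => hint i, hmean]

end Pi

lemma exists_restrict_le_smul {X : Type*} [MeasurableSpace X] {μ ν : Measure X}
    [IsFiniteMeasure μ] [SigmaFinite ν] (hac : μ ≪ ν) {ε : ENNReal} (hε : 0 < ε) :
    ∃ (B : Set X) (C : NNReal), MeasurableSet B ∧ μ Bᶜ ≤ ε ∧ μ.restrict B ≤ C • ν := by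
  let B : ℕ → Set X := fun m => {x | μ.rnDeriv ν x ≤ m}
  have hB : ∀ m, MeasurableSet (B m) := fun m =>
    measurableSet_le (Measure.measurable_rnDeriv μ ν) measurable_const
  have hnull : μ (⋂ m, (B m)ᶜ) = 0 := by
    refine hac (measure_mono_null (fun x hx => ?_) (ae_iff.1 (Measure.rnDeriv_lt_top μ ν)))
    intro hlt
    obtain ⟨m, hm⟩ := ENNReal.exists_nat_gt hlt.ne
    exact Set.mem_iInter.1 hx m hm.le
  have hlim := tendsto_measure_iInter_atTop (μ := μ) (fun m => (hB m).compl.nullMeasurableSet)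
    (fun a b hab => Set.compl_subset_compl.2 fun x (hx : μ.rnDeriv ν x ≤ a) =>
      hx.trans (by exact_mod_cast hab))
    ⟨0, measure_ne_top μ _⟩
  rw [hnull] at hlim
  obtain ⟨m, hm⟩ := (hlim.eventually_le_const hε).exists
  refine ⟨B m, m, hB m, hm, ?_⟩
  calc μ.restrict (B m) = (ν.restrict (B m)).withDensity (μ.rnDeriv ν) := by
        rw [← restrict_withDensity (hB m), Measure.withDensity_rnDeriv_eq μ ν hac]
    _ ≤ (ν.restrict (B m)).withDensity fun _ => m :=
        withDensity_mono (ae_restrict_of_forall_mem (hB m) fun _ hx => hx)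
    _ = (m : NNReal) • ν.restrict (B m) := by
        rw [withDensity_const]; simp [ENNReal.smul_def]
    _ ≤ (m : NNReal) • ν := by gcongr; exact Measure.restrict_le_self

lemma exists_strictMono_comp_perm {ι α : Type*} [Finite ι] [LinearOrder ι] [LinearOrder α]
    {x : ι → α} (hx : Function.Injective x) : ∃ σ : Equiv.Perm ι, StrictMono (x ∘ σ) := by
  cases nonempty_fintype ι
  let e : Fin (Fintype.card ι) ≃o ι := Fintype.orderIsoFinOfCardEq ι rfl
  let τ := Tuple.sort (x ∘ e)
  have hτ : StrictMono ((x ∘ e) ∘ τ) := (Tuple.monotone_sort _).strictMono_of_injective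
    ((hx.comp e.injective).comp τ.injective)
  exact ⟨e.symm.toEquiv.trans (τ.trans e.toEquiv), hτ.comp e.symm.strictMono⟩

lemma perm_eq_of_strictMono_comp {ι α : Type*} [LinearOrder ι] [WellFoundedLT ι] [Preorder α]
    {x : ι → α} {σ τ : Equiv.Perm ι} (hσ : StrictMono (x ∘ σ)) (hτ : StrictMono (x ∘ τ)) :
    σ = τ := by
  have hcomp : x ∘ σ = x ∘ τ := by
    rw [← hσ.range_inj hτ]
    simp
  have hx : Function.Injective x := σ.injective_comp x |>.1 hσ.injective
  exact Equiv.ext fun i => hx (congrFun hcomp i)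

lemma measurableSet_strictMono {ι X : Type*} [Countable ι] [Preorder ι] [MeasurableSpace X]
    {f : ι → X → ℝ} (hf : ∀ i, Measurable (f i)) :
    MeasurableSet {p : X | StrictMono fun i => f i p} := by
  simp only [StrictMono, Set.ofPred_forall]
  exact .iInter fun i => .iInter fun j => .iInter fun _ => measurableSet_lt (hf i) (hf j)

/- The `(card ι)!` rearrangements of the left-hand event partition the right-hand one and have equal
measure, as the coordinates are exchangeable. -/
lemma factorial_mul_measure_strictMono_inter {ι X : Type*} [Fintype ι] [LinearOrder ι]
    [MeasurableSpace X] (μ : Measure X) [SigmaFinite μ] {f : X → ℝ} (hf : Measurable f)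
    {D : Set (ι → X)} (hD : MeasurableSet D)
    (hDperm : ∀ (σ : Equiv.Perm ι) p, p ∘ σ ∈ D ↔ p ∈ D) :
    (Fintype.card ι).factorial * (Measure.pi fun _ => μ) ({p | StrictMono (f ∘ p)} ∩ D) =
      (Measure.pi fun _ => μ) ({p | Function.Injective (f ∘ p)} ∩ D) := by
  set S : Set (ι → X) := {p | StrictMono (f ∘ p)} with hS_def
  have hS : MeasurableSet (S ∩ D) :=
    (measurableSet_strictMono fun i => hf.comp (measurable_pi_apply i)).inter hD
  have hcover : {p | Function.Injective (f ∘ p)} ∩ D =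
      ⋃ σ : Equiv.Perm ι, (· ∘ σ) ⁻¹' (S ∩ D) := by
    ext p
    simp only [Set.mem_inter_iff, Set.mem_iUnion, Set.mem_preimage, hDperm, hS_def,
      Set.mem_ofPred_eq, exists_and_right, ← Function.comp_assoc]
    refine and_congr_left fun _ => ⟨exists_strictMono_comp_perm, ?_⟩
    rintro ⟨σ, hσ⟩
    exact (σ.injective_comp _).1 hσ.injective
  rw [hcover, measure_iUnion]
  · simp only [(measurePreserving_comp_perm μ _).measure_preimage hS.nullMeasurableSet,
      tsum_fintype, Finset.sum_const, Finset.card_univ, Fintype.card_perm, nsmul_eq_mul]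
  · intro σ τ hne
    refine Set.disjoint_left.2 fun p hσ hτ => hne ?_
    exact perm_eq_of_strictMono_comp (x := f ∘ p) hσ.1 hτ.1
  · exact fun σ => (measurePreserving_comp_perm μ σ).measurable hS

lemma factorial_mul_measure_sorted_le {ι κ : Type*} [Fintype ι] [LinearOrder κ] {e : ι → κ}
    (he : Function.Injective e) (ν : Measure ℝ) [SigmaFinite ν] :
    (Fintype.card ι).factorial * (Measure.pi fun _ : ι => ν) {x | ∀ i j, e i < e j → x i < x j} ≤
      ν Set.univ ^ Fintype.card ι := by
  let _ : LinearOrder ι := LinearOrder.lift' e he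
  have h := factorial_mul_measure_strictMono_inter (ι := ι) ν measurable_id .univ (by simp)
  simp only [Set.inter_univ, Function.id_comp] at h
  refine h.trans_le ((measure_mono (Set.subset_univ _)).trans_eq ?_)
  simp [Measure.pi_univ]

/-- The event that `n` points are listed by increasing first coordinate and form the pattern `π`.
The condition `StrictMono (Prod.snd ∘ p ∘ π.symm)` says that `π i` is the rank of the second
coordinate of `p i`; it fails at ties, which are null for a pre-permuton. -/
def patternEvent {n : ℕ} (π : Equiv.Perm (Fin n)) : Set (Fin n → ℝ × ℝ) :=
  {p | StrictMono (Prod.fst ∘ p) ∧ StrictMono (Prod.snd ∘ p ∘ π.symm)}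

section PatternEvent

variable {n : ℕ} {μ : Measure (ℝ × ℝ)}

lemma measurableSet_patternEvent (π : Equiv.Perm (Fin n)) : MeasurableSet (patternEvent π) :=
  (measurableSet_strictMono fun i => (measurable_pi_apply i).fst).inter
    (measurableSet_strictMono fun i => (measurable_pi_apply (π.symm i)).snd)

lemma pairwise_disjoint_patternEvent :
    Pairwise (Function.onFun Disjoint (patternEvent (n := n))) := by
  intro π ρ hne
  refine Set.disjoint_left.2 fun p hπ hρ => hne (Equiv.symm_bijective.injective ?_)
  exact perm_eq_of_strictMono_comp (x := Prod.snd ∘ p) hπ.2 hρ.2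

lemma iUnion_patternEvent :
    ⋃ π : Equiv.Perm (Fin n), patternEvent π =
      {p | StrictMono (Prod.fst ∘ p) ∧ Function.Injective (Prod.snd ∘ p)} := by
  ext p
  simp only [Set.mem_iUnion, patternEvent, Set.mem_ofPred_eq, exists_and_left]
  refine and_congr_right fun _ => ⟨?_, fun hinj => ?_⟩
  · rintro ⟨π, hπ⟩
    exact (π.symm.injective_comp (Prod.snd ∘ p)).1 hπ.injective
  · obtain ⟨σ, hσ⟩ := exists_strictMono_comp_perm hinj
    exact ⟨σ.symm, hσ⟩

lemma mem_patternEvent_iff {π : Equiv.Perm (Fin n)} {p : Fin n → ℝ × ℝ}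
    (hp : Function.Injective (Prod.snd ∘ p)) :
    p ∈ patternEvent π ↔
      ∀ i j, i < j → (p i).1 < (p j).1 ∧ ((p i).2 < (p j).2 ↔ π i < π j) := by
  constructor
  · rintro ⟨hfst, hsnd⟩ i j hij
    exact ⟨hfst hij, by simpa using hsnd.lt_iff_lt (a := π i) (b := π j)⟩
  · refine fun h => ⟨fun i j hij => (h i j hij).1, fun a b hab => ?_⟩
    rcases lt_trichotomy (π.symm a) (π.symm b) with hlt | heq | hgt
    · exact (h _ _ hlt).2.2 (by simpa using hab)
    · exact absurd (π.symm.injective heq) hab.ne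
    · have hle : ¬ (p (π.symm b)).2 < (p (π.symm a)).2 :=
        mt (h _ _ hgt).2.1 (by simpa using hab.le)
      exact lt_of_le_of_ne (not_lt.1 hle) (hp.ne hgt.ne')

namespace IsPrePermuton

lemma ae_injective_fst (hμ : IsPrePermuton μ) :
    ∀ᵐ p ∂Measure.pi fun _ : Fin n => μ, Function.Injective (Prod.fst ∘ p) := by
  have := hμ.1
  refine ae_injective_comp measurable_fst μ fun x => ?_
  simpa [Measure.map_apply measurable_fst] using hμ.2.1 x

lemma ae_injective_snd (hμ : IsPrePermuton μ) :
    ∀ᵐ p ∂Measure.pi fun _ : Fin n => μ, Function.Injective (Prod.snd ∘ p) := by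
  have := hμ.1
  refine ae_injective_comp measurable_snd μ fun y => ?_
  simpa [Measure.map_apply measurable_snd] using hμ.2.2 y

lemma patternProb_eq (hμ : IsPrePermuton μ) (π : Equiv.Perm (Fin n)) :
    patternProb μ π = n.factorial * (Measure.pi fun _ : Fin n => μ).real (patternEvent π) := by
  have hae : patternEvent π =ᵐ[Measure.pi fun _ : Fin n => μ] {p | ∀ i j, i < j →
      (p i).1 < (p j).1 ∧ ((p i).2 < (p j).2 ↔ π i < π j)} := by
    filter_upwards [hμ.ae_injective_snd] with p hp
    exact propext (mem_patternEvent_iff hp)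
  rw [patternProb, Measure.real, measure_congr hae]

lemma factorial_mul_sum_measure_patternEvent_inter (hμ : IsPrePermuton μ)
    {D : Set (Fin n → ℝ × ℝ)} (hD : MeasurableSet D)
    (hDperm : ∀ (σ : Equiv.Perm (Fin n)) p, p ∘ σ ∈ D ↔ p ∈ D) :
    n.factorial * ∑ π, (Measure.pi fun _ : Fin n => μ).real (patternEvent π ∩ D) =
      (Measure.pi fun _ : Fin n => μ).real D := by
  have := hμ.1
  set P := Measure.pi fun _ : Fin n => μ
  have hsum : ∑ π, P.real (patternEvent π ∩ D) = P.real ({p | StrictMono (Prod.fst ∘ p)} ∩ D) := by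
    rw [← measureReal_iUnion_fintype
      (fun π ρ hne => (pairwise_disjoint_patternEvent hne).mono Set.inter_subset_left
        Set.inter_subset_left)
      fun π => (measurableSet_patternEvent π).inter hD, ← Set.iUnion_inter, iUnion_patternEvent]
    refine measureReal_congr ?_
    filter_upwards [hμ.ae_injective_snd] with p hp
    exact propext (and_congr_left fun _ => and_iff_left hp)
  have hfst : P.real ({p | Function.Injective (Prod.fst ∘ p)} ∩ D) = P.real D := by
    refine measureReal_congr ?_
    filter_upwards [hμ.ae_injective_fst] with p hp
    exact propext (and_iff_right hp)
  have hsort := congrArg ENNReal.toReal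
    (factorial_mul_measure_strictMono_inter μ measurable_fst hD hDperm)
  rw [hsum, ← hfst]
  simpa [Measure.real] using hsort

lemma sum_patternProb (hμ : IsPrePermuton μ) (n : ℕ) :
    ∑ π : Equiv.Perm (Fin n), patternProb μ π = 1 := by
  have := hμ.1
  simpa [hμ.patternProb_eq, ← Finset.mul_sum] using
    hμ.factorial_mul_sum_measure_patternEvent_inter (n := n) .univ (by simp)

end IsPrePermuton

end PatternEvent

lemma sq_factorial_mul_measure_sorted_le {ι κ κ' : Type*} [Fintype ι] [LinearOrder κ]
    [LinearOrder κ'] {e₁ : ι → κ} {e₂ : ι → κ'} (he₁ : Function.Injective e₁)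
    (he₂ : Function.Injective e₂) (ν₁ ν₂ : Measure ℝ) [SigmaFinite ν₁] [SigmaFinite ν₂] :
    (Fintype.card ι).factorial ^ 2 * (Measure.pi fun _ : ι => ν₁.prod ν₂)
      {z | (∀ i j, e₁ i < e₁ j → (z i).1 < (z j).1) ∧ ∀ i j, e₂ i < e₂ j → (z i).2 < (z j).2} ≤
      (ν₁ Set.univ * ν₂ Set.univ) ^ Fintype.card ι := by
  have hsplit : (Measure.pi fun _ : ι => ν₁.prod ν₂)
      {z | (∀ i j, e₁ i < e₁ j → (z i).1 < (z j).1) ∧ ∀ i j, e₂ i < e₂ j → (z i).2 < (z j).2} =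
      (Measure.pi fun _ : ι => ν₁) {x | ∀ i j, e₁ i < e₁ j → x i < x j} *
        (Measure.pi fun _ : ι => ν₂) {y | ∀ i j, e₂ i < e₂ j → y i < y j} := by
    rw [← Measure.prod_prod, ← (measurePreserving_arrowProdEquivProdArrow ℝ ℝ ι
      (fun _ => ν₁) fun _ => ν₂).measure_preimage_equiv]
    rfl
  rw [hsplit, sq, mul_mul_mul_comm, mul_pow]
  exact mul_le_mul' (factorial_mul_measure_sorted_le he₁ ν₁)
    (factorial_mul_measure_sorted_le he₂ ν₂)

section PatternBound

variable {n : ℕ} {μ : Measure (ℝ × ℝ)} [IsProbabilityMeasure μ] {ν₁ ν₂ : Measure ℝ}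
  [SigmaFinite ν₁] [SigmaFinite ν₂] {B : Set (ℝ × ℝ)}

lemma sq_factorial_mul_measure_patternEvent_subset_preimage_le (hB : MeasurableSet B)
    (hBν : μ.restrict B ≤ ν₁.prod ν₂) (π : Equiv.Perm (Fin n)) (T : Finset (Fin n)) :
    T.card.factorial ^ 2 * (Measure.pi fun _ : Fin n => μ) (patternEvent π ∩ {p | ↑T ⊆ p ⁻¹' B}) ≤
      (ν₁ Set.univ * ν₂ Set.univ) ^ T.card := by
  let E : Set (T → ℝ × ℝ) := {z | (∀ i j : T, (i : Fin n) < j → (z i).1 < (z j).1) ∧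
    ∀ i j : T, π i < π j → (z i).2 < (z j).2}
  have hsub : patternEvent π ∩ {p | ↑T ⊆ p ⁻¹' B} ⊆
      T.restrict ⁻¹' (E ∩ Set.univ.pi fun _ => B) := by
    rintro p ⟨⟨hfst, hsnd⟩, hT⟩
    refine ⟨⟨fun i j hij => hfst hij, fun i j hij => ?_⟩, fun i _ => hT i.2⟩
    simpa using @hsnd (π i) (π j) hij
  have hE : (Measure.pi fun _ : Fin n => μ) (patternEvent π ∩ {p | ↑T ⊆ p ⁻¹' B}) ≤
      (Measure.pi fun _ : T => ν₁.prod ν₂) E :=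
    calc _ ≤ (Measure.pi fun _ : T => μ) (E ∩ Set.univ.pi fun _ => B) :=
          (measure_mono hsub).trans
            ((measurePreserving_finsetRestrict μ T).measure_preimage_le _)
      _ = (Measure.pi fun _ : T => μ.restrict B) E := by
          rw [← Measure.restrict_pi_pi, Measure.restrict_apply' (.univ_pi fun _ => hB)]
      _ ≤ (Measure.pi fun _ : T => ν₁.prod ν₂) E := measurePi_mono (fun _ => hBν) E
  refine (mul_le_mul_right hE _).trans ?_
  simpa only [Fintype.card_coe] using sq_factorial_mul_measure_sorted_le (ι := T)
    (e₁ := ((↑) : T → Fin n)) (e₂ := fun i => π i) Subtype.val_injective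
    (π.injective.comp Subtype.val_injective) ν₁ ν₂

lemma sq_factorial_mul_measure_patternEvent_le_ncard_le (hB : MeasurableSet B)
    (hBν : μ.restrict B ≤ ν₁.prod ν₂) (π : Equiv.Perm (Fin n)) (k : ℕ) :
    k.factorial ^ 2 * (Measure.pi fun _ : Fin n => μ)
      (patternEvent π ∩ {p | k ≤ (p ⁻¹' B).ncard}) ≤
      2 ^ n * (ν₁ Set.univ * ν₂ Set.univ) ^ k := by
  classical
  have hcover : patternEvent π ∩ {p | k ≤ (p ⁻¹' B).ncard} ⊆
      ⋃ T ∈ (Finset.univ : Finset (Fin n)).powersetCard k, patternEvent π ∩ {p | ↑T ⊆ p ⁻¹' B} := by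
    rintro p ⟨hπ, hk⟩
    obtain ⟨T, hT, hcard⟩ := Set.exists_subset_card_eq hk
    have hTk : T.toFinset ∈ (Finset.univ : Finset (Fin n)).powersetCard k := by
      simp [← hcard, Set.ncard_eq_toFinset_card']
    exact Set.mem_iUnion₂.2 ⟨T.toFinset, hTk, hπ, by simpa using hT⟩
  calc k.factorial ^ 2 * (Measure.pi fun _ : Fin n => μ)
        (patternEvent π ∩ {p | k ≤ (p ⁻¹' B).ncard})
    _ ≤ k.factorial ^ 2 * ∑ T ∈ (Finset.univ : Finset (Fin n)).powersetCard k,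
        (Measure.pi fun _ : Fin n => μ) (patternEvent π ∩ {p | ↑T ⊆ p ⁻¹' B}) := by
        gcongr
        exact (measure_mono hcover).trans (measure_biUnion_finset_le _ _)
    _ ≤ ∑ _T ∈ (Finset.univ : Finset (Fin n)).powersetCard k,
        (ν₁ Set.univ * ν₂ Set.univ) ^ k := by
        rw [Finset.mul_sum]
        refine Finset.sum_le_sum fun T hT => ?_
        rw [← (Finset.mem_powersetCard.1 hT).2]
        exact sq_factorial_mul_measure_patternEvent_subset_preimage_le hB hBν π T
    _ = n.choose k * (ν₁ Set.univ * ν₂ Set.univ) ^ k := by simp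
    _ ≤ 2 ^ n * (ν₁ Set.univ * ν₂ Set.univ) ^ k := by
        gcongr
        exact_mod_cast n.choose_le_two_pow k

end PatternBound

section NegMulLog

variable {α : Type*} [Fintype α] {t : α → ℝ}

lemma sum_negMulLog_le_log_card (ht : ∀ a, 0 ≤ t a) (hsum : ∑ a, t a = 1) :
    ∑ a, Real.negMulLog (t a) ≤ Real.log (Fintype.card α) := by
  have : Nonempty α := by
    by_contra hempty
    simp [not_nonempty_iff.1 hempty] at hsum
  have hcard : (0 : ℝ) < Fintype.card α := by exact_mod_cast Fintype.card_pos
  have hjensen := Real.concaveOn_negMulLog.le_map_sum (t := Finset.univ)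
    (w := fun _ : α => (Fintype.card α : ℝ)⁻¹) (p := t) (fun _ _ => by positivity)
    (by simp [hcard.ne']) fun a _ => ht a
  simp only [smul_eq_mul, ← Finset.mul_sum, hsum, mul_one, Real.negMulLog, Real.log_inv,
    neg_mul_neg] at hjensen
  exact le_of_mul_le_mul_left hjensen (inv_pos.2 hcard)

lemma mul_neg_log_le_sum_negMulLog {r : α → ℝ} {Q η : ℝ} (ht : ∀ a, 0 ≤ t a)
    (hsum : ∑ a, t a = 1) (hr : ∀ a, 0 ≤ r a) (hη : ∑ a, r a ≤ η) (htr : ∀ a, t a ≤ Q + r a)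
    (hQ : 2 * Q ≤ 1) (hQ0 : 0 < Q) :
    (1 - 2 * η) * -Real.log (2 * Q) ≤ ∑ a, Real.negMulLog (t a) := by
  have hlog : 0 ≤ -Real.log (2 * Q) := neg_nonneg.2 (Real.log_nonpos (by positivity) hQ)
  have hpoint : ∀ a, (t a - 2 * r a) * -Real.log (2 * Q) ≤ Real.negMulLog (t a) := by
    intro a
    rcases le_or_gt (t a) (2 * Q) with hsmall | hlarge
    · calc _ ≤ t a * -Real.log (2 * Q) := by gcongr; linarith [hr a]
        _ ≤ Real.negMulLog (t a) := by
          rcases (ht a).eq_or_lt with hzero | hpos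
          · simp [← hzero]
          · rw [Real.negMulLog, neg_mul, ← mul_neg]
            gcongr
    · have hta : t a ≤ 1 := hsum ▸ Finset.single_le_sum (fun b _ => ht b) (Finset.mem_univ a)
      have hneg : t a - 2 * r a ≤ 0 := by linarith [htr a]
      exact (mul_nonpos_of_nonpos_of_nonneg hneg hlog).trans (Real.negMulLog_nonneg (ht a) hta)
  calc _ ≤ (∑ a, (t a - 2 * r a)) * -Real.log (2 * Q) := by
        rw [Finset.sum_sub_distrib, hsum, ← Finset.mul_sum]
        gcongr
    _ ≤ ∑ a, Real.negMulLog (t a) := by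
        rw [Finset.sum_mul]
        exact Finset.sum_le_sum fun a _ => hpoint a

end NegMulLog

/-- The bound on the probability that `n` random points form a given pattern while at least `k` of
them lie in a set where `μ` is dominated by a product measure of total mass at most `K`; the factor
`2 ^ n` bounds the number of choices of `k` such points. -/
noncomputable def patternBound (K : ℝ) (n k : ℕ) : ℝ :=
  n.factorial * (2 ^ n * K ^ k) / k.factorial ^ 2

lemma ncard_preimage_comp_perm {ι X : Type*} (B : Set X) (p : ι → X) (σ : Equiv.Perm ι) :
    ((p ∘ σ) ⁻¹' B).ncard = (p ⁻¹' B).ncard :=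
  Set.ncard_preimage_of_injective_subset_range (s := p ⁻¹' B) σ.injective (by simp)

lemma ncard_preimage_add_ncard_preimage_compl {ι X : Type*} [Fintype ι] (B : Set X) (p : ι → X) :
    (p ⁻¹' B).ncard + (p ⁻¹' Bᶜ).ncard = Fintype.card ι := by
  rw [Set.preimage_compl, Set.ncard_add_ncard_compl, Nat.card_eq_fintype_card]

lemma measureReal_ncard_preimage_lt_ceil_le {X : Type*} [MeasurableSpace X] (μ : Measure X)
    [IsProbabilityMeasure μ] {B : Set X} (hB : MeasurableSet B) {δ : ℝ} (hδ : 0 < δ)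
    (hBδ : μ.real Bᶜ ≤ δ ^ 2) {n : ℕ} (hn : 0 < n) :
    (Measure.pi fun _ : Fin n => μ).real {p | (p ⁻¹' B).ncard < ⌈(1 - δ) * n⌉₊} ≤ δ := by
  have hsub : {p : Fin n → X | (p ⁻¹' B).ncard < ⌈(1 - δ) * n⌉₊} ⊆
      {p | δ * n ≤ (p ⁻¹' Bᶜ).ncard} := fun p hp => by
    have hlt : ((p ⁻¹' B).ncard : ℝ) < (1 - δ) * n := Nat.lt_ceil.1 hp
    have hadd : ((p ⁻¹' B).ncard : ℝ) + (p ⁻¹' Bᶜ).ncard = n := by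
      exact_mod_cast (ncard_preimage_add_ncard_preimage_compl B p).trans (Fintype.card_fin n)
    change δ * n ≤ _
    linarith
  have hδn : 0 < δ * n := by positivity
  refine (measureReal_mono hsub).trans (le_of_mul_le_mul_left ?_ hδn)
  calc δ * n * (Measure.pi fun _ : Fin n => μ).real {p | δ * n ≤ (p ⁻¹' Bᶜ).ncard}
    _ ≤ n * μ.real Bᶜ := by
        simpa using mul_measureReal_le_ncard_preimage_le (ι := Fin n) μ hB.compl (δ * n)
    _ ≤ n * δ ^ 2 := by gcongr
    _ = δ * n * δ := by ring

namespace IsPrePermuton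

variable {μ : Measure (ℝ × ℝ)} {ν₁ ν₂ : Measure ℝ} [IsFiniteMeasure ν₁] [IsFiniteMeasure ν₂]
  {B : Set (ℝ × ℝ)} {K : ℝ} {n : ℕ}

lemma patternProb_le (hμ : IsPrePermuton μ) (hB : MeasurableSet B)
    (hBν : μ.restrict B ≤ ν₁.prod ν₂) (hK : ν₁.real Set.univ * ν₂.real Set.univ ≤ K)
    (π : Equiv.Perm (Fin n)) (k : ℕ) :
    patternProb μ π ≤ patternBound K n k + n.factorial *
      (Measure.pi fun _ : Fin n => μ).real (patternEvent π ∩ {p | (p ⁻¹' B).ncard < k}) := by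
  have := hμ.1
  set P := Measure.pi fun _ : Fin n => μ
  have hmany : P.real (patternEvent π ∩ {p | k ≤ (p ⁻¹' B).ncard}) ≤
      2 ^ n * K ^ k / k.factorial ^ 2 := by
    have htop : 2 ^ n * (ν₁ Set.univ * ν₂ Set.univ) ^ k ≠ ⊤ := by finiteness
    have hreal := ENNReal.toReal_mono htop
      (sq_factorial_mul_measure_patternEvent_le_ncard_le hB hBν π k)
    rw [le_div_iff₀' (by positivity)]
    calc _ ≤ 2 ^ n * (ν₁.real Set.univ * ν₂.real Set.univ) ^ k := by
          simpa [Measure.real] using hreal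
      _ ≤ 2 ^ n * K ^ k := by gcongr
  have hsplit : patternEvent π ⊆ (patternEvent π ∩ {p | k ≤ (p ⁻¹' B).ncard}) ∪
      (patternEvent π ∩ {p | (p ⁻¹' B).ncard < k}) := fun p hp =>
    (le_or_gt k _).imp (⟨hp, ·⟩) (⟨hp, ·⟩)
  calc patternProb μ π = n.factorial * P.real (patternEvent π) := hμ.patternProb_eq π
    _ ≤ n.factorial * (2 ^ n * K ^ k / k.factorial ^ 2 +
        P.real (patternEvent π ∩ {p | (p ⁻¹' B).ncard < k})) := by
        gcongr
        exact (measureReal_mono hsplit).trans ((measureReal_union_le _ _).trans (by gcongr))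
    _ = _ := by rw [patternBound, mul_add, ← mul_div_assoc]

lemma mul_neg_log_patternBound_le_samplingEntropy (hμ : IsPrePermuton μ) (hB : MeasurableSet B)
    (hBν : μ.restrict B ≤ ν₁.prod ν₂) (hK : ν₁.real Set.univ * ν₂.real Set.univ ≤ K) (hK0 : 0 < K)
    {k : ℕ} {η : ℝ} (hη : (Measure.pi fun _ : Fin n => μ).real {p | (p ⁻¹' B).ncard < k} ≤ η)
    (hbound : 2 * patternBound K n k ≤ 1) :
    (1 - 2 * η) * -Real.log (2 * patternBound K n k) ≤ samplingEntropy μ n := by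
  refine mul_neg_log_le_sum_negMulLog (fun π => by unfold patternProb; positivity)
    (hμ.sum_patternProb n) (fun π => by positivity) ?_
    (fun π => hμ.patternProb_le hB hBν hK π k) hbound (by unfold patternBound; positivity)
  rw [← Finset.mul_sum, hμ.factorial_mul_sum_measure_patternEvent_inter
    (measurableSet_lt (measurable_ncard_preimage hB) measurable_const)
    fun σ p => by simp only [Set.mem_ofPred_eq, ncard_preimage_comp_perm]]
  exact hη

lemma samplingEntropy_le_log_factorial (hμ : IsPrePermuton μ) (n : ℕ) :
    samplingEntropy μ n ≤ Real.log n.factorial := by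
  simpa [samplingEntropy, Fintype.card_perm] using
    sum_negMulLog_le_log_card (fun π => by unfold patternProb; positivity) (hμ.sum_patternProb n)

end IsPrePermuton

lemma tendsto_log_natCast_atTop : Tendsto (fun n : ℕ => Real.log n) atTop atTop :=
  Real.tendsto_log_atTop.comp tendsto_natCast_atTop_atTop

lemma tendsto_log_factorial_div_mul_log :
    Tendsto (fun n : ℕ => Real.log n.factorial / (n * Real.log n)) atTop (nhds 1) := by
  have hlower : Tendsto (fun n : ℕ => 1 - (Real.log n)⁻¹) atTop (nhds 1) := by
    simpa using tendsto_log_natCast_atTop.inv_tendsto_atTop.const_sub 1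
  refine tendsto_of_tendsto_of_tendsto_of_le_of_le' hlower tendsto_const_nhds ?_ ?_
  all_goals
    filter_upwards [eventually_gt_atTop 1] with n hn
    have hlog : 0 < Real.log n := Real.log_pos (by exact_mod_cast hn)
    have : (0 : ℝ) < n := by positivity
  · have hstirling := Stirling.le_log_factorial_stirling (n := n) (by positivity)
    have hpi : 0 < Real.log (2 * Real.pi) := Real.log_pos (by linarith [Real.pi_gt_three])
    rw [le_div_iff₀ (by positivity)]
    calc (1 - (Real.log n)⁻¹) * (n * Real.log n) = n * Real.log n - n := by field_simp
      _ ≤ Real.log n.factorial := by linarith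
  · rw [div_le_one (by positivity), ← Real.log_pow]
    exact Real.log_le_log (by positivity) (by exact_mod_cast n.factorial_le_pow)

lemma tendsto_ceil_mul_natCast_div {c : ℝ} (hc : 0 ≤ c) :
    Tendsto (fun n : ℕ => (⌈c * n⌉₊ : ℝ) / n) atTop (nhds c) :=
  (tendsto_nat_ceil_mul_div_atTop hc).comp tendsto_natCast_atTop_atTop

lemma tendsto_log_ceil_mul_div_log {c : ℝ} (hc : 0 < c) :
    Tendsto (fun n : ℕ => Real.log ⌈c * n⌉₊ / Real.log n) atTop (nhds 1) := by
  have hlim := (((tendsto_ceil_mul_natCast_div hc.le).log hc.ne').div_atTop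
    tendsto_log_natCast_atTop).add_const 1
  rw [zero_add] at hlim
  refine hlim.congr' ?_
  filter_upwards [eventually_gt_atTop 1] with n hn
  have hlog : 0 < Real.log n := Real.log_pos (by exact_mod_cast hn)
  have : 0 < ⌈c * n⌉₊ := Nat.ceil_pos.2 (by positivity)
  rw [Real.log_div (by positivity) (by positivity)]
  field_simp
  ring

lemma tendsto_log_factorial_ceil_mul_div_mul_log {c : ℝ} (hc : 0 < c) :
    Tendsto (fun n : ℕ => Real.log (⌈c * n⌉₊.factorial) / (n * Real.log n)) atTop (nhds c) := by
  have hceil : Tendsto (fun n : ℕ => ⌈c * n⌉₊) atTop atTop :=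
    tendsto_nat_ceil_atTop.comp (tendsto_natCast_atTop_atTop.const_mul_atTop hc)
  have hlim := ((tendsto_log_factorial_div_mul_log.comp hceil).mul
    (tendsto_ceil_mul_natCast_div hc.le)).mul (tendsto_log_ceil_mul_div_log hc)
  rw [one_mul, mul_one] at hlim
  refine hlim.congr' ?_
  filter_upwards [hceil.eventually_gt_atTop 1] with n hn
  have hlog : 0 < Real.log ⌈c * n⌉₊ := Real.log_pos (by exact_mod_cast hn)
  have : (0 : ℝ) < ⌈c * n⌉₊ := by positivity
  simp only [Function.comp_apply]
  field_simp

lemma tendsto_neg_log_patternBound_div_mul_log {K c : ℝ} (hK : 0 < K) (hc : 0 < c) :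
    Tendsto (fun n : ℕ => -Real.log (2 * patternBound K n ⌈c * n⌉₊) / (n * Real.log n)) atTop
      (nhds (2 * c - 1)) := by
  have hinv := tendsto_log_natCast_atTop.inv_tendsto_atTop
  have hnat : Tendsto (fun n : ℕ => (n : ℝ)⁻¹) atTop (nhds 0) :=
    tendsto_natCast_atTop_atTop.inv_tendsto_atTop
  have hlinear : Tendsto (fun n : ℕ => (Real.log 2 * (n : ℝ)⁻¹ + Real.log 2 +
      Real.log K * (⌈c * n⌉₊ / n)) * (Real.log n)⁻¹) atTop (nhds 0) := by
    simpa using (((hnat.const_mul _).add_const _).add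
      ((tendsto_ceil_mul_natCast_div hc.le).const_mul _)).mul hinv
  have hlim := ((((tendsto_log_factorial_ceil_mul_div_mul_log hc).const_mul 2).sub
    tendsto_log_factorial_div_mul_log).sub hlinear)
  rw [sub_zero] at hlim
  refine hlim.congr' ?_
  filter_upwards [eventually_gt_atTop 1] with n hn
  have hlog : 0 < Real.log n := Real.log_pos (by exact_mod_cast hn)
  rw [patternBound, Real.log_mul (by positivity) (by positivity),
    Real.log_div (by positivity) (by positivity), Real.log_mul (by positivity) (by positivity),
    Real.log_mul (by positivity) (by positivity), Real.log_pow, Real.log_pow, Real.log_pow]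
  push_cast
  field_simp
  ring

namespace IsPrePermuton

lemma of_absolutelyContinuous_prod {μ : Measure (ℝ × ℝ)} [IsProbabilityMeasure μ]
    {ν₁ ν₂ : Measure ℝ} [NullSingletonClass ν₁] [NullSingletonClass ν₂]
    (hac : μ ≪ ν₁.prod ν₂) : IsPrePermuton μ :=
  ⟨‹_›,
    fun x => (hac.map measurable_fst).trans Measure.quasiMeasurePreserving_fst.absolutelyContinuous
      (measure_singleton x),
    fun y => (hac.map measurable_snd).trans Measure.quasiMeasurePreserving_snd.absolutelyContinuous
      (measure_singleton y)⟩

lemma eventually_lt_samplingEntropy_div {μ : Measure (ℝ × ℝ)} (hμ : IsPrePermuton μ)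
    {ν₁ ν₂ : Measure ℝ} [IsFiniteMeasure ν₁] [IsFiniteMeasure ν₂] (hac : μ ≪ ν₁.prod ν₂) {δ : ℝ}
    (hδ : 0 < δ) (hδ2 : δ < 1 / 2) {a : ℝ} (ha : a < (1 - 2 * δ) ^ 2) :
    ∀ᶠ n : ℕ in atTop, a < samplingEntropy μ n / (n * Real.log n) := by
  have := hμ.1
  obtain ⟨B, C, hB, hBδ, hBν⟩ := exists_restrict_le_smul hac
    (ENNReal.ofReal_pos.2 (show 0 < δ ^ 2 by positivity))
  replace hBν : μ.restrict B ≤ (C • ν₁).prod ν₂ := hBν.trans_eq (Measure.prod_smul_left C).symm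
  obtain ⟨K, hK⟩ := exists_gt ((C • ν₁).real Set.univ * ν₂.real Set.univ)
  have hK0 : 0 < K := hK.trans_le' (by positivity)
  have hlim := tendsto_neg_log_patternBound_div_mul_log (c := 1 - δ) hK0 (by linarith)
  have hlower := hlim.const_mul (1 - 2 * δ)
  rw [show (1 - 2 * δ) * (2 * (1 - δ) - 1) = (1 - 2 * δ) ^ 2 by ring] at hlower
  filter_upwards [hlower.eventually_const_lt ha, eventually_gt_atTop 1,
    hlim.eventually_const_lt (show 0 < 2 * (1 - δ) - 1 by linarith)] with n han hn hpos
  have hlog : 0 < Real.log n := Real.log_pos (by exact_mod_cast hn)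
  have hn0 : 0 < n := by positivity
  have hbound : 2 * patternBound K n ⌈(1 - δ) * n⌉₊ ≤ 1 := by
    have hneg := (div_pos_iff_of_pos_right (by positivity)).1 hpos
    exact ((Real.log_neg_iff (by unfold patternBound; positivity)).1 (neg_pos.1 hneg)).le
  refine han.trans_le ?_
  rw [← mul_div_assoc]
  gcongr
  exact hμ.mul_neg_log_patternBound_le_samplingEntropy hB hBν hK.le hK0
    (measureReal_ncard_preimage_lt_ceil_le μ hB hδ
      (ENNReal.toReal_le_of_le_ofReal (by positivity) hBδ) hn0) hbound

end IsPrePermuton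

theorem samplingEntropy_uniform_on_set_general {μ : Measure (ℝ × ℝ)} (hμ : IsPrePermuton μ)
    {ν₁ ν₂ : Measure ℝ} [SFinite ν₁] [SFinite ν₂] (hac : μ ≪ ν₁.prod ν₂) :
    Tendsto (fun n : ℕ => samplingEntropy μ n / (n * Real.log n)) atTop (nhds 1) := by
  have hfin : μ ≪ ν₁.toFinite.prod ν₂.toFinite := hac.trans
    ((absolutelyContinuous_toFinite ν₁).prod (absolutelyContinuous_toFinite ν₂))
  refine tendsto_order.2 ⟨fun a ha => ?_, fun b hb => ?_⟩
  · have hδ : Tendsto (fun δ : ℝ => (1 - 2 * δ) ^ 2) (nhdsWithin 0 (Set.Ioi 0)) (nhds 1) :=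
      Continuous.tendsto' (by fun_prop) 0 1 (by norm_num) |>.mono_left nhdsWithin_le_nhds
    obtain ⟨δ, haδ, hδ0, hδ2⟩ := ((hδ.eventually_const_lt ha).and
      (Ioo_mem_nhdsGT (show (0 : ℝ) < 1 / 2 by norm_num))).exists
    exact hμ.eventually_lt_samplingEntropy_div hfin hδ0 hδ2 haδ
  · filter_upwards [tendsto_log_factorial_div_mul_log.eventually_lt_const hb] with n hn
    refine hn.trans_le' ?_
    gcongr
    exact hμ.samplingEntropy_le_log_factorial n

/-- For the normalized uniform distribution λ^A on a Borel set A ⊆ ℝ² of positive finite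
Lebesgue measure, H_n(λ^A)/(n log n) → 1. -/
theorem samplingEntropy_uniform_on_set
    (A : Set (ℝ × ℝ)) (hA : MeasurableSet A)
    (hpos : 0 < volume A) (hfin : volume A < ⊤) :
    Tendsto
      (fun n : ℕ =>
        samplingEntropy ((volume A)⁻¹ • volume.restrict A) n / (n * Real.log n))
      atTop (nhds 1) := by
  have hac : ProbabilityTheory.cond volume A ≪ (volume : Measure ℝ).prod volume :=
    ProbabilityTheory.cond_absolutelyContinuous
  have hprob := ProbabilityTheory.cond_isProbabilityMeasure_of_finite hpos.ne' hfin.ne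
  have hμ := IsPrePermuton.of_absolutelyContinuous_prod hac
  exact samplingEntropy_uniform_on_set_general hμ hac
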